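/- Let A be a finite alphabet with |A| ≥ 2. The kernel of the action of Aut(A^ℤ) on Ω is exactly Σ(A^ℤ): an automorphism g ∈ Aut(A^ℤ) satisfies g·x = x for all x ∈ Ω if and only if g is a power of the shift σ. In particular the action factors through Aut(A^ℤ)/Σ(A^ℤ) and the induced action of this quotient on Ω is faithful. -/

import Mathlib

/-!
An automorphism is determined by its values on `φ(U)`, for any neighbourhood `U` of a point `x`:
given `y ∈ A^ℤ`, the one-sided configuration that follows `x` before position `p` and `y`, moved
right by `2p`, from there on tends to `x` as `p → ∞`, while its image under `φ`, moved back left by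
`2p`, tends to `y`.

If `g` acts trivially on `Ω`, then `g (φ x)` is the translate of `φ x` whose constant prefix ends at
`ℓ (g (φ x))`.  By continuity of `g` at the constant configuration `x 0`, the images `g (φ x')` of
all `x'` with `x' 0 = x 0` are constant on a common half-line, so `ℓ (g (φ x'))` depends only on a
finite window and is constant near `x`.  Hence `g` agrees with one power of the shift near `x`, and
so everywhere.
-/

open Filter MeasureTheory

/-- The group of self-homeomorphisms of a topological space,
with `(f * g) x = f (g x)`. -/
instance homeoGroup (X : Type*) [TopologicalSpace X] : Group (X ≃ₜ X) where
  mul f g := g.trans f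
  one := Homeomorph.refl X
  inv := Homeomorph.symm
  mul_assoc f g h := Homeomorph.ext fun _ => rfl
  one_mul f := Homeomorph.ext fun _ => rfl
  mul_one f := Homeomorph.ext fun _ => rfl
  inv_mul_cancel f := Homeomorph.ext f.symm_apply_apply

/-- The left shift `(σ x) m = x (m+1)` on `A^ℤ`, as a homeomorphism. -/
def shiftHomeo (A : Type*) [TopologicalSpace A] : (ℤ → A) ≃ₜ (ℤ → A) where
  toFun x := fun m => x (m + 1)
  invFun x := fun m => x (m - 1)
  left_inv x := funext fun m => by simp
  right_inv x := funext fun m => by simp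
  continuous_toFun := continuous_pi fun m => continuous_apply (m + 1)
  continuous_invFun := continuous_pi fun m => continuous_apply (m - 1)

/-- `Aut(A^ℤ)`: the group of homeomorphisms of `A^ℤ` commuting with the shift. -/
def ShiftAut (A : Type*) [TopologicalSpace A] : Subgroup ((ℤ → A) ≃ₜ (ℤ → A)) :=
  Subgroup.centralizer {shiftHomeo A}

/-- `Ω`: the space of one-sided configurations whose zeroth symbol differs from
the first. -/
def OmegaSet (A : Type*) : Set (ℕ → A) := {x | x 0 ≠ x 1}

/-- `Ω^a`: the elements of `Ω` whose zeroth symbol is `a`. -/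
def OmegaA (A : Type*) (a : A) : Set (ℕ → A) := {x | x 0 = a ∧ x 0 ≠ x 1}

/-- `φ : Ω → A^ℤ_*` prepends an infinite constant `x 0` prefix to `x`. -/
def phiMap (A : Type*) (x : ℕ → A) : ℤ → A :=
  fun m => if m ≤ 0 then x 0 else x m.toNat

/-- `ℓ(y)`: the last coordinate of the constant prefix of `y ∈ A^ℤ_*`. -/
noncomputable def ellVal (A : Type*) (y : ℤ → A) : ℤ :=
  sInf {m : ℤ | y m ≠ y (m + 1)}

/-- The action of `Aut(A^ℤ)` on `Ω`: `g • x = ψ (g (φ x))`, where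
`ψ(y) = φ⁻¹(σ^{ℓ(y)} y)`, i.e. `(g • x) n = (g (φ x)) (ℓ (g (φ x)) + n)`. -/
noncomputable def omegaAct (A : Type*) [TopologicalSpace A]
    (g : (ℤ → A) ≃ₜ (ℤ → A)) (x : ℕ → A) : ℕ → A :=
  fun n => g (phiMap A x) (ellVal A (g (phiMap A x)) + n)

/-- `G* = ∩_{a ∈ A} G^a`, where `G^a` is the set of automorphisms that
preserve `Ω^a` under the action on `Ω`. -/
def Gstar (A : Type*) [TopologicalSpace A] : Set ((ℤ → A) ≃ₜ (ℤ → A)) :=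
  {g | g ∈ ShiftAut A ∧ ∀ a : A, omegaAct A g '' OmegaA A a = OmegaA A a}

open Topology

section ChangeSet

variable {A : Type*}

/-- The positions at which `y` changes its symbol.  By definition `ℓ(y)` is the infimum of this set,
and `N` is a lower bound of it exactly when `y` is constant on `(-∞, N]`. -/
def changeSet (y : ℤ → A) : Set ℤ := {m | y m ≠ y (m + 1)}

theorem eq_of_mem_lowerBounds_changeSet {y : ℤ → A} {N m : ℤ}
    (hN : N ∈ lowerBounds (changeSet y)) (hm : m ≤ N) : y m = y N := by
  induction m, hm using Int.leInductionDown with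
  | base => rfl
  | pred n hn ih =>
    have hnot : n - 1 ∉ changeSet y := fun h => absurd (hN h) (by omega)
    have heq : y (n - 1) = y (n - 1 + 1) := not_not.1 hnot
    rw [heq, sub_add_cancel, ih]

theorem ellVal_mem_lowerBounds_changeSet {y : ℤ → A} (hy : BddBelow (changeSet y)) :
    ellVal A y ∈ lowerBounds (changeSet y) :=
  fun _ hm => csInf_le hy hm

theorem phiMap_of_nonpos (x : ℕ → A) {m : ℤ} (hm : m ≤ 0) : phiMap A x m = x 0 :=
  if_pos hm

theorem phiMap_natCast (x : ℕ → A) (n : ℕ) : phiMap A x n = x n := by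
  rcases n.eq_zero_or_pos with rfl | hn
  · exact phiMap_of_nonpos x le_rfl
  · exact if_neg (by omega)

theorem isLeast_changeSet_phiMap {x : ℕ → A} (hx : x ∈ OmegaSet A) :
    IsLeast (changeSet (phiMap A x)) 0 := by
  refine ⟨hx, fun m hm => ?_⟩
  by_contra! hneg
  exact hm ((phiMap_of_nonpos x hneg.le).trans (phiMap_of_nonpos x (by omega)).symm)

theorem omegaSet_nonempty [Nontrivial A] : (OmegaSet A).Nonempty := by
  obtain ⟨a, b, hab⟩ := exists_pair_ne A
  exact ⟨fun n => if n = 0 then a else b, hab⟩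

end ChangeSet

section Topology

theorem exists_forall_eqOn_Iic_of_eventually_nhds {ι X : Type*} [Preorder ι] [IsDirectedOrder ι]
    [Nonempty ι] [TopologicalSpace X] {y : ι → X} {p : (ι → X) → Prop} (h : ∀ᶠ z in 𝓝 y, p z) :
    ∃ N, ∀ z, Set.EqOn z y (Set.Iic N) → p z := by
  obtain ⟨U, hUp, hU, hyU⟩ := eventually_nhds_iff.1 h
  obtain ⟨I, u, hu, hIu⟩ := isOpen_pi_iff.1 hU y hyU
  obtain ⟨N, hN⟩ := I.exists_le
  refine ⟨N, fun z hz => hUp z (hIu fun i hi => ?_)⟩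
  rw [hz (hN i hi)]
  exact (hu i hi).2

theorem eventually_nhds_apply_eq {ι X : Type*} [TopologicalSpace X] [DiscreteTopology X]
    (y : ι → X) (i : ι) : ∀ᶠ z in 𝓝 y, z i = y i :=
  ((IsLocallyConstant.iff_continuous _).2 (continuous_apply i)).eventually_eq y

variable {A : Type*} [TopologicalSpace A]

theorem continuous_phiMap : Continuous (phiMap A) := by
  refine continuous_pi fun m => ?_
  by_cases hm : m ≤ 0
  · simpa only [phiMap, if_pos hm] using continuous_apply 0
  · simpa only [phiMap, if_neg hm] using continuous_apply m.toNat

theorem isOpen_omegaSet [T2Space A] : IsOpen (OmegaSet A) :=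
  isOpen_ne_fun (continuous_apply 0) (continuous_apply 1)

variable [DiscreteTopology A]

theorem eventually_mem_changeSet_iff (y : ℤ → A) (m : ℤ) :
    ∀ᶠ z in 𝓝 y, m ∈ changeSet z ↔ m ∈ changeSet y := by
  filter_upwards [eventually_nhds_apply_eq y m, eventually_nhds_apply_eq y (m + 1)] with z hm hm'
  simp only [changeSet, Set.mem_ofPred_eq, hm, hm']

theorem eventually_isLeast_changeSet {y : ℤ → A} {k : ℤ} (hk : IsLeast (changeSet y) k) (N : ℤ) :
    ∀ᶠ z in 𝓝 y, N ∈ lowerBounds (changeSet z) → IsLeast (changeSet z) k := by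
  have hwindow : ∀ᶠ z in 𝓝 y, ∀ m ∈ Finset.Icc N k, m ∈ changeSet z ↔ m ∈ changeSet y :=
    (Finset.eventually_all _).2 fun m _ => eventually_mem_changeSet_iff y m
  filter_upwards [hwindow, eventually_mem_changeSet_iff y k] with z hz hzk hN
  refine ⟨hzk.2 hk.1, fun m hm => ?_⟩
  by_contra! hlt
  have hmy : m ∈ changeSet y := (hz m (Finset.mem_Icc.2 ⟨hN hm, hlt.le⟩)).1 hm
  exact hlt.not_ge (hk.2 hmy)

end Topology

section Shift

variable {A : Type*} [TopologicalSpace A]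

theorem shiftHomeo_zpow_apply (j : ℤ) (y : ℤ → A) (m : ℤ) :
    (shiftHomeo A ^ j) y m = y (m + j) := by
  induction j using Int.induction_on generalizing y with
  | zero => rw [zpow_zero, add_zero]; rfl
  | succ i ih =>
    calc (shiftHomeo A ^ (i + 1 : ℤ)) y m
        = (shiftHomeo A ^ (i : ℤ)) (shiftHomeo A y) m := by rw [zpow_add_one]; rfl
      _ = y (m + i + 1) := ih _
      _ = y (m + (i + 1)) := by rw [add_assoc]
  | pred i ih =>
    calc (shiftHomeo A ^ (-i - 1 : ℤ)) y m
        = (shiftHomeo A ^ (-i : ℤ)) ((shiftHomeo A).symm y) m := by rw [zpow_sub_one]; rfl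
      _ = y (m + -i - 1) := ih _
      _ = y (m + (-i - 1)) := by rw [add_sub_assoc]

theorem shiftHomeo_zpow_mem_shiftAut (j : ℤ) : shiftHomeo A ^ j ∈ ShiftAut A :=
  Subgroup.mem_centralizer_singleton_iff.2 (Commute.zpow_self _ j).eq

theorem apply_shiftHomeo_zpow {g : (ℤ → A) ≃ₜ (ℤ → A)} (hg : g ∈ ShiftAut A) (j : ℤ)
    (y : ℤ → A) : g ((shiftHomeo A ^ j) y) = (shiftHomeo A ^ j) (g y) := by
  have hcomm : Commute g (shiftHomeo A) := Subgroup.mem_centralizer_singleton_iff.1 hg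
  exact DFunLike.congr_fun (hcomm.zpow_right j).eq y

theorem mem_changeSet_shiftHomeo_zpow {j m : ℤ} {y : ℤ → A} :
    m ∈ changeSet ((shiftHomeo A ^ j) y) ↔ m + j ∈ changeSet y := by
  simp only [changeSet, Set.mem_ofPred_eq, shiftHomeo_zpow_apply, add_right_comm]

theorem isLeast_changeSet_shiftHomeo_zpow_phiMap {x : ℕ → A} (hx : x ∈ OmegaSet A) (j : ℤ) :
    IsLeast (changeSet ((shiftHomeo A ^ j) (phiMap A x))) (-j) := by
  have hφ := isLeast_changeSet_phiMap hx
  refine ⟨mem_changeSet_shiftHomeo_zpow.2 ?_, fun m hm => ?_⟩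
  · rw [neg_add_cancel]
    exact hφ.1
  · exact neg_le_iff_add_nonneg.2 (hφ.2 (mem_changeSet_shiftHomeo_zpow.1 hm))

theorem eq_shiftHomeo_zpow_phiMap {x : ℕ → A} {y : ℤ → A} {k : ℤ}
    (hk : k ∈ lowerBounds (changeSet y)) (h : ∀ n : ℕ, y (k + n) = x n) :
    y = (shiftHomeo A ^ (-k)) (phiMap A x) := by
  funext m
  rw [shiftHomeo_zpow_apply]
  rcases le_total m k with hmk | hkm
  · have h0 : y k = x 0 := by simpa only [Nat.cast_zero, add_zero] using h 0
    rw [eq_of_mem_lowerBounds_changeSet hk hmk, phiMap_of_nonpos x (by omega), h0]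
  · obtain ⟨n, rfl⟩ := Int.le.dest hkm
    rw [h, add_neg_cancel_comm, phiMap_natCast]

theorem omegaAct_shiftHomeo_zpow (j : ℤ) {x : ℕ → A} (hx : x ∈ OmegaSet A) :
    omegaAct A (shiftHomeo A ^ j) x = x := by
  have hell : ellVal A ((shiftHomeo A ^ j) (phiMap A x)) = -j :=
    (isLeast_changeSet_shiftHomeo_zpow_phiMap hx j).csInf_eq
  funext n
  rw [omegaAct, hell, shiftHomeo_zpow_apply, neg_add_cancel_comm, phiMap_natCast]

end Shift

section Splice

variable {A : Type*}

/-- The one-sided configuration that agrees with `x` before `p` and with `y`, moved right by `2p`,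
from `p` on.  Moving by `2p` rather than `p` leaves room for the coordinates `-p, …, -1` of `y`. -/
def splice (x : ℕ → A) (y : ℤ → A) (p : ℕ) : ℕ → A :=
  fun n => if n < p then x n else y (n - 2 * p)

variable [TopologicalSpace A]

theorem tendsto_splice (x : ℕ → A) (y : ℤ → A) : Tendsto (splice x y) atTop (𝓝 x) := by
  refine tendsto_pi_nhds.2 fun n => tendsto_const_nhds.congr' ?_
  filter_upwards [eventually_gt_atTop n] with p hp
  exact (if_pos hp).symm

theorem tendsto_shiftHomeo_zpow_phiMap_splice (x : ℕ → A) (y : ℤ → A) :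
    Tendsto (fun p : ℕ => (shiftHomeo A ^ (2 * p : ℤ)) (phiMap A (splice x y p))) atTop (𝓝 y) := by
  refine tendsto_pi_nhds.2 fun m => tendsto_const_nhds.congr' ?_
  filter_upwards [eventually_ge_atTop (-m).toNat] with p hp
  obtain ⟨n, hn⟩ : ∃ n : ℕ, m + 2 * p = n := Int.eq_ofNat_of_zero_le (by omega)
  rw [shiftHomeo_zpow_apply, hn, phiMap_natCast, splice, if_neg (by omega), ← hn,
    add_sub_cancel_right]

theorem eq_of_eventually_apply_phiMap_eq [T2Space A] {f g : (ℤ → A) ≃ₜ (ℤ → A)}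
    (hf : f ∈ ShiftAut A) (hg : g ∈ ShiftAut A) {x : ℕ → A}
    (h : ∀ᶠ x' in 𝓝 x, f (phiMap A x') = g (phiMap A x')) : f = g := by
  ext1 y
  refine (isClosed_eq f.continuous g.continuous).mem_of_tendsto
    (tendsto_shiftHomeo_zpow_phiMap_splice x y) ?_
  filter_upwards [(tendsto_splice x y).eventually h] with p hp
  rw [apply_shiftHomeo_zpow hf, apply_shiftHomeo_zpow hg, hp]

end Splice

section TrivialAction

variable {A : Type*} [TopologicalSpace A] [DiscreteTopology A] {g : (ℤ → A) ≃ₜ (ℤ → A)}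

theorem exists_mem_lowerBounds_changeSet_apply (hg : g ∈ ShiftAut A) (a : A) :
    ∃ N : ℤ, ∀ y : ℤ → A, (∀ m ≤ 0, y m = a) → N ∈ lowerBounds (changeSet (g y)) := by
  let c : ℤ → A := fun _ => a
  have hc : 0 ∉ changeSet (g c) := by
    have hshift : (shiftHomeo A ^ (1 : ℤ)) c = c := funext fun _ => shiftHomeo_zpow_apply _ _ _
    have hgc : g c = (shiftHomeo A ^ (1 : ℤ)) (g c) := by rw [← apply_shiftHomeo_zpow hg, hshift]
    exact not_not.2 ((congrFun hgc 0).trans (shiftHomeo_zpow_apply _ _ _))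
  have hnear : ∀ᶠ z in 𝓝 c, 0 ∉ changeSet (g z) := by
    filter_upwards [(g.continuous.tendsto c).eventually (eventually_mem_changeSet_iff (g c) 0)]
      with z hz
    rwa [hz]
  obtain ⟨M, hM⟩ := exists_forall_eqOn_Iic_of_eventually_nhds hnear
  refine ⟨-M, fun y hy m hm => ?_⟩
  by_contra! hlt
  refine hM ((shiftHomeo A ^ m) y) (fun i hi => ?_) ?_
  · rw [shiftHomeo_zpow_apply]
    exact hy _ (by have := Set.mem_Iic.1 hi; omega)
  · rwa [apply_shiftHomeo_zpow hg, mem_changeSet_shiftHomeo_zpow, zero_add]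

theorem bddBelow_changeSet_apply_phiMap (hg : g ∈ ShiftAut A) (x : ℕ → A) :
    BddBelow (changeSet (g (phiMap A x))) :=
  let ⟨N, hN⟩ := exists_mem_lowerBounds_changeSet_apply hg (x 0)
  ⟨N, hN _ fun _ => phiMap_of_nonpos x⟩

theorem apply_phiMap_eq_of_omegaAct_eq (hg : g ∈ ShiftAut A) {x : ℕ → A}
    (h : omegaAct A g x = x) :
    g (phiMap A x) = (shiftHomeo A ^ (-ellVal A (g (phiMap A x)))) (phiMap A x) :=
  eq_shiftHomeo_zpow_phiMap
    (ellVal_mem_lowerBounds_changeSet (bddBelow_changeSet_apply_phiMap hg x)) (congrFun h)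

theorem eventually_ellVal_apply_phiMap_eq (hg : g ∈ ShiftAut A) {x : ℕ → A}
    (hx : x ∈ OmegaSet A) (h : omegaAct A g x = x) :
    ∀ᶠ x' in 𝓝 x, ellVal A (g (phiMap A x')) = ellVal A (g (phiMap A x)) := by
  obtain ⟨N, hN⟩ := exists_mem_lowerBounds_changeSet_apply hg (x 0)
  have hleast : IsLeast (changeSet (g (phiMap A x))) (ellVal A (g (phiMap A x))) := by
    have := isLeast_changeSet_shiftHomeo_zpow_phiMap hx (-ellVal A (g (phiMap A x)))
    rwa [← apply_phiMap_eq_of_omegaAct_eq hg h, neg_neg] at this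
  have hcont : Tendsto (fun x' => g (phiMap A x')) (𝓝 x) (𝓝 (g (phiMap A x))) :=
    (g.continuous.comp continuous_phiMap).tendsto x
  filter_upwards [hcont.eventually (eventually_isLeast_changeSet hleast N),
    eventually_nhds_apply_eq x 0] with x' hx' hx0
  exact (hx' (hN _ fun m hm => (phiMap_of_nonpos x' hm).trans hx0)).csInf_eq

end TrivialAction

theorem omegaAct_kernel_eq_shifts_general (A : Type*) [TopologicalSpace A] [DiscreteTopology A] :
    ∀ g : (ℤ → A) ≃ₜ (ℤ → A), g ∈ ShiftAut A →
      ((∀ x ∈ OmegaSet A, omegaAct A g x = x) ↔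
        g ∈ Subgroup.zpowers (shiftHomeo A)) := by
  intro g hg
  rw [Subgroup.mem_zpowers_iff]
  constructor
  · intro htriv
    cases subsingleton_or_nontrivial A
    · exact ⟨0, Homeomorph.ext fun y => Subsingleton.elim _ _⟩
    obtain ⟨x, hx⟩ := omegaSet_nonempty (A := A)
    refine ⟨-ellVal A (g (phiMap A x)),
      eq_of_eventually_apply_phiMap_eq (x := x) (shiftHomeo_zpow_mem_shiftAut _) hg ?_⟩
    filter_upwards [isOpen_omegaSet.mem_nhds hx,
      eventually_ellVal_apply_phiMap_eq hg hx (htriv x hx)] with x' hx' hell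
    rw [apply_phiMap_eq_of_omegaAct_eq hg (htriv x' hx'), hell]
  · rintro ⟨j, rfl⟩ x hx
    exact omegaAct_shiftHomeo_zpow j hx

/-- The kernel of the action of `Aut(A^ℤ)` on `Ω` is exactly `Σ(A^ℤ)`:
an automorphism acts trivially on `Ω` if and only if it is a power of the
shift.  (In particular the action descends to a faithful action of
`Aut(A^ℤ)/Σ(A^ℤ)` on `Ω`.) -/
theorem omegaAct_kernel_eq_shifts
    (A : Type*) [Fintype A] [TopologicalSpace A] [DiscreteTopology A]
    (hA : 2 ≤ Fintype.card A) :
    ∀ g : (ℤ → A) ≃ₜ (ℤ → A), g ∈ ShiftAut A →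
      ((∀ x ∈ OmegaSet A, omegaAct A g x = x) ↔
        g ∈ Subgroup.zpowers (shiftHomeo A)) :=
  omegaAct_kernel_eq_shifts_general A
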